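/- Let N be a positive integer, t₀ < T real numbers, and f : ℝ^N × ℝ → ℝ^N continuously differentiable. Suppose h : ℝ^N × [t₀,T] → ℝ^N is continuously differentiable in (u,t), satisfies ∂h/∂t(u,t) = f(h(u,t),t) and h(u,t₀) = u for all u in an open neighborhood of a point u₀. Let J(t) := (∂f/∂h)(h(u₀,t),t) and assume J(s)·J(t) = J(t)·J(s) for all s, t ∈ [t₀,T]. Then the derivative of the time-T solution map u ↦ h(u,T) at u₀ equals the matrix exponential exp( ∫_{t₀}^{T} J(τ) dτ ). -/

import Mathlib

open Matrix

attribute [local instance] Matrix.normedAddCommGroup Matrix.normedSpace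

/-!
The derivative of the solution map solves the variational equation `Φ' = J Φ`, `Φ(t₀) = 1`. To see
this, put `z = h(u, ·) - h(u₀, ·)`. As long as `z` is small, `‖z'‖ ≤ L ‖z‖`, and Grönwall's
inequality keeps `z` small up to time `T`, with `‖z‖ ≤ C ‖u - u₀‖`. By compactness of the
trajectory of `u₀`, the error `z' - J z` is then `o(‖u - u₀‖)` uniformly in time, so Grönwall's
inequality for `z - Φ (u - u₀)` gives `z(T) = Φ(T) (u - u₀) + o(‖u - u₀‖)`. When the `J(t)` commute,
the variational equation is solved by `Φ(t) = exp (∫_{t₀}^t J)`.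
-/

open Set Filter Topology

section LocalGronwall

variable {E : Type*} [NormedAddCommGroup E] [NormedSpace ℝ E]

theorem norm_le_mul_exp_of_norm_deriv_right_lt {z z' : ℝ → E} {a b L r δ : ℝ}
    (hz : ContinuousOn z (Icc a b))
    (hz' : ∀ t ∈ Ico a b, HasDerivWithinAt z (z' t) (Ici t) t)
    (hL : 0 ≤ L) (hr : 0 < r) (ha : ‖z a‖ ≤ r) (hrδ : r * Real.exp (L * (b - a)) < δ)
    (bound : ∀ t ∈ Ico a b, 0 < ‖z t‖ → ‖z t‖ < δ → ‖z' t‖ < L * ‖z t‖) :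
    ∀ t ∈ Icc a b, ‖z t‖ ≤ r * Real.exp (L * (t - a)) := by
  have hB (t : ℝ) : HasDerivAt (fun s ↦ r * Real.exp (L * (s - a)))
      (L * (r * Real.exp (L * (t - a)))) t :=
    ((((hasDerivAt_id' t).sub_const a).const_mul L).exp.const_mul r).congr_deriv (by ring)
  refine image_norm_le_of_norm_deriv_right_lt_deriv_boundary hz hz' (by simpa using ha) hB ?_
  intro t ht hcontact
  have hpos : 0 < ‖z t‖ := hcontact ▸ by positivity
  have hlt : ‖z t‖ < δ := by
    refine hcontact.trans_lt (lt_of_le_of_lt ?_ hrδ)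
    gcongr
    exact ht.2.le
  exact hcontact ▸ bound t ht hpos hlt

theorem norm_sub_fundamentalSolution_le {z z' : ℝ → E} {A Φ : ℝ → E →L[ℝ] E} {a b M η : ℝ}
    (hz : ∀ t ∈ Icc a b, HasDerivWithinAt z (z' t) (Icc a b) t)
    (hΦ : ∀ t ∈ Icc a b, HasDerivWithinAt Φ (A t * Φ t) (Icc a b) t) (hΦa : Φ a = 1)
    (hA : ∀ t ∈ Icc a b, ‖A t‖ ≤ M) (hη : ∀ t ∈ Icc a b, ‖z' t - A t (z t)‖ ≤ η) :
    ∀ t ∈ Icc a b, ‖z t - Φ t (z a)‖ ≤ gronwallBound 0 M η (t - a) := by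
  have hw (t) (ht : t ∈ Icc a b) : HasDerivWithinAt (fun s ↦ z s - Φ s (z a))
      (z' t - A t (Φ t (z a))) (Icc a b) t :=
    (hz t ht).sub <|
      (ContinuousLinearMap.apply ℝ E (z a)).hasFDerivAt.comp_hasDerivWithinAt t (hΦ t ht)
  refine norm_le_gronwallBound_of_norm_deriv_right_le (HasDerivWithinAt.continuousOn hw)
    (fun t ht ↦ (hw t (Ico_subset_Icc_self ht)).mono_of_mem_nhdsWithin
      (Icc_mem_nhdsGE_of_mem ht)) (by simp [hΦa]) fun t ht ↦ ?_
  have ht' : t ∈ Icc a b := Ico_subset_Icc_self ht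
  calc ‖z' t - A t (Φ t (z a))‖
      = ‖A t (z t - Φ t (z a)) + (z' t - A t (z t))‖ := by rw [map_sub]; congr 1; abel
    _ ≤ ‖A t (z t - Φ t (z a))‖ + ‖z' t - A t (z t)‖ := norm_add_le _ _
    _ ≤ M * ‖z t - Φ t (z a)‖ + η := by
        gcongr
        · exact (A t).le_of_opNorm_le (hA t ht') _
        · exact hη t ht'

end LocalGronwall

theorem continuousOn_eval_along {X P Y : Type*} [TopologicalSpace X] [TopologicalSpace P]
    [TopologicalSpace Y] {F : X → P → Y} (hF : Continuous fun q : X × P ↦ F q.1 q.2) {S : Set P}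
    {γ : P → X} (hγ : ContinuousOn γ S) : ContinuousOn (fun p ↦ F (γ p) p) S :=
  hF.comp_continuousOn (hγ.prodMk continuousOn_id)

theorem continuous_fderiv_left {𝕜 E P G : Type*} [NontriviallyNormedField 𝕜]
    [NormedAddCommGroup E] [NormedSpace 𝕜 E] [NormedAddCommGroup P] [NormedSpace 𝕜 P]
    [NormedAddCommGroup G] [NormedSpace 𝕜 G]
    {f : E → P → G} (hf : ContDiff 𝕜 1 fun q : E × P ↦ f q.1 q.2) :
    Continuous fun q : E × P ↦ fderiv 𝕜 (fun x ↦ f x q.2) q.1 := by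
  have huncurry : ContDiff 𝕜 1 (Function.uncurry fun (q : E × P) (x : E) ↦ f x q.2) :=
    hf.comp (contDiff_snd.prodMk (contDiff_snd.comp contDiff_fst))
  exact (huncurry.fderiv contDiff_fst (zero_add 1).le).continuous

section SolutionMap

variable {E : Type*} [NormedAddCommGroup E] [NormedSpace ℝ E]

theorem exists_uniform_linearization_along {G P : Type*} [NormedAddCommGroup G] [NormedSpace ℝ G]
    [PseudoMetricSpace P] {f : E → P → G} {F : E → P → E →L[ℝ] G}
    (hf : ∀ x p, HasFDerivAt (fun y ↦ f y p) (F x p) x)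
    (hF : Continuous fun q : E × P ↦ F q.1 q.2)
    {S : Set P} (hS : IsCompact S) {γ : P → E} (hγ : ContinuousOn γ S) {ε : ℝ} (hε : 0 < ε) :
    ∃ δ > 0, ∀ p ∈ S, ∀ x, ‖x - γ p‖ < δ →
      ‖f x p - f (γ p) p - F (γ p) p (x - γ p)‖ ≤ ε * ‖x - γ p‖ := by
  have hgraph : IsCompact ((fun p ↦ (γ p, p)) '' S) :=
    hS.image_of_continuousOn (hγ.prodMk continuousOn_id)
  obtain ⟨δ, hδ, hclose⟩ := Metric.mem_uniformity_dist.1 <|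
    hgraph.uniformContinuousAt_of_continuousAt _ (fun _ _ ↦ hF.continuousAt)
      (Metric.dist_mem_uniformity hε)
  refine ⟨δ, hδ, fun p hp x hx ↦ ?_⟩
  refine (convex_ball (γ p) δ).norm_image_sub_le_of_norm_hasFDerivWithin_le'
    (fun y _ ↦ (hf y p).hasFDerivWithinAt) (fun y hy ↦ ?_) (Metric.mem_ball_self hδ)
    (mem_ball_iff_norm.2 hx)
  have hdist : dist (γ p, p) (y, p) < δ := by
    simpa [Prod.dist_eq, hδ] using Metric.mem_ball'.1 hy
  rw [← dist_eq_norm, dist_comm]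
  exact (hclose hdist ⟨p, hp, rfl⟩).le

variable {f : E → ℝ → E} {h : E → ℝ → E} {u₀ : E} {a b : ℝ}

theorem eventually_norm_solution_sub_le
    (hode : ∀ᶠ u in 𝓝 u₀, ∀ t ∈ Icc a b, HasDerivWithinAt (h u) (f (h u t) t) (Icc a b) t)
    (hinit : ∀ᶠ u in 𝓝 u₀, h u a = u) {L δ : ℝ} (hL : 0 ≤ L) (hδ : 0 < δ)
    (hlip : ∀ t ∈ Icc a b, ∀ x, ‖x - h u₀ t‖ < δ →
      ‖f x t - f (h u₀ t) t‖ ≤ L * ‖x - h u₀ t‖) :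
    ∀ᶠ u in 𝓝 u₀, ∀ t ∈ Icc a b,
      ‖h u t - h u₀ t‖ ≤ Real.exp ((L + 1) * (b - a)) * ‖u - u₀‖ := by
  have hsmall : ∀ᶠ u in 𝓝 u₀, ‖u - u₀‖ * Real.exp ((L + 1) * (b - a)) < δ :=
    ContinuousAt.eventually_lt (by fun_prop) continuousAt_const (by simpa using hδ)
  filter_upwards [hode, hinit, hsmall] with u hu hua hsmall t ht
  rcases eq_or_ne u u₀ with rfl | hne
  · simp
  have hz (s) (hs : s ∈ Icc a b) := (hu s hs).sub (hode.self_of_nhds s hs)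
  calc ‖h u t - h u₀ t‖ ≤ ‖u - u₀‖ * Real.exp ((L + 1) * (t - a)) :=
        norm_le_mul_exp_of_norm_deriv_right_lt (z := h u - h u₀)
          (HasDerivWithinAt.continuousOn hz)
          (fun s hs ↦ (hz s (Ico_subset_Icc_self hs)).mono_of_mem_nhdsWithin
            (Icc_mem_nhdsGE_of_mem hs))
          (by positivity) (norm_sub_pos_iff.2 hne) (by simp [hua, hinit.self_of_nhds]) hsmall
          (fun s hs hpos hlt ↦ (hlip s (Ico_subset_Icc_self hs) _ hlt).trans_lt
            (mul_lt_mul_of_pos_right (lt_add_one L) hpos)) t ht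
    _ ≤ Real.exp ((L + 1) * (b - a)) * ‖u - u₀‖ := by
        rw [mul_comm]
        gcongr
        exact ht.2

theorem exists_eventually_norm_solution_sub_le {F : E → ℝ → E →L[ℝ] E}
    (hf : ∀ x t, HasFDerivAt (fun y ↦ f y t) (F x t) x)
    (hF : Continuous fun p : E × ℝ ↦ F p.1 p.2)
    (hode : ∀ᶠ u in 𝓝 u₀, ∀ t ∈ Icc a b, HasDerivWithinAt (h u) (f (h u t) t) (Icc a b) t)
    (hinit : ∀ᶠ u in 𝓝 u₀, h u a = u) :
    ∃ C > 0, ∀ᶠ u in 𝓝 u₀, ∀ t ∈ Icc a b, ‖h u t - h u₀ t‖ ≤ C * ‖u - u₀‖ := by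
  have hγ : ContinuousOn (h u₀) (Icc a b) := HasDerivWithinAt.continuousOn hode.self_of_nhds
  obtain ⟨M, hMpos, hM⟩ := (isCompact_Icc.image_of_continuousOn
    (continuousOn_eval_along hF hγ)).isBounded.exists_pos_norm_le
  rw [forall_mem_image] at hM
  obtain ⟨δ, hδ, hlin⟩ := exists_uniform_linearization_along hf hF isCompact_Icc hγ one_pos
  refine ⟨_, Real.exp_pos _, eventually_norm_solution_sub_le (L := 1 + M) hode hinit
    (by positivity) hδ fun t ht x hx ↦ ?_⟩
  calc ‖f x t - f (h u₀ t) t‖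
      ≤ ‖f x t - f (h u₀ t) t - F (h u₀ t) t (x - h u₀ t)‖ + ‖F (h u₀ t) t (x - h u₀ t)‖ :=
        norm_le_norm_sub_add _ _
    _ ≤ (1 + M) * ‖x - h u₀ t‖ := by
        rw [add_mul]
        exact add_le_add (hlin t ht x hx) ((F (h u₀ t) t).le_of_opNorm_le (hM ht) _)

theorem hasFDerivAt_solution_of_variational_equation {F : E → ℝ → E →L[ℝ] E}
    (hf : ∀ x t, HasFDerivAt (fun y ↦ f y t) (F x t) x)
    (hF : Continuous fun p : E × ℝ ↦ F p.1 p.2)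
    (hode : ∀ᶠ u in 𝓝 u₀, ∀ t ∈ Icc a b, HasDerivWithinAt (h u) (f (h u t) t) (Icc a b) t)
    (hinit : ∀ᶠ u in 𝓝 u₀, h u a = u) {Φ : ℝ → E →L[ℝ] E}
    (hΦ : ∀ t ∈ Icc a b, HasDerivWithinAt Φ (F (h u₀ t) t * Φ t) (Icc a b) t) (hΦa : Φ a = 1)
    {t : ℝ} (ht : t ∈ Icc a b) :
    HasFDerivAt (fun u ↦ h u t) (Φ t) u₀ := by
  have hγ : ContinuousOn (h u₀) (Icc a b) := HasDerivWithinAt.continuousOn hode.self_of_nhds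
  obtain ⟨M, hMpos, hM⟩ := (isCompact_Icc.image_of_continuousOn
    (continuousOn_eval_along hF hγ)).isBounded.exists_pos_norm_le
  rw [forall_mem_image] at hM
  obtain ⟨C, hC, hlip⟩ := exists_eventually_norm_solution_sub_le hf hF hode hinit
  rw [hasFDerivAt_iff_isLittleO, Asymptotics.isLittleO_iff]
  intro c hc
  -- `ε` is chosen so that the Grönwall bound at time `t` is at most `c * ‖u - u₀‖`.
  obtain ⟨δ, hδ, hlin⟩ := exists_uniform_linearization_along hf hF isCompact_Icc hγ
    (ε := M * c / (C * Real.exp (M * (t - a)))) (by positivity)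
  have hsmall : ∀ᶠ u in 𝓝 u₀, C * ‖u - u₀‖ < δ :=
    ContinuousAt.eventually_lt (by fun_prop) continuousAt_const (by simpa using hδ)
  filter_upwards [hode, hinit, hlip, hsmall] with u hu hua hlip hsmall
  have herr (s) (hs : s ∈ Icc a b) :
      ‖f (h u s) s - f (h u₀ s) s - F (h u₀ s) s (h u s - h u₀ s)‖ ≤
        M * c / (C * Real.exp (M * (t - a))) * (C * ‖u - u₀‖) :=
    (hlin s hs _ ((hlip s hs).trans_lt hsmall)).trans (by gcongr; exact hlip s hs)
  have hgronwall := norm_sub_fundamentalSolution_le (z := h u - h u₀)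
    (fun s hs ↦ (hu s hs).sub (hode.self_of_nhds s hs)) hΦ hΦa (fun _ hs ↦ hM hs) herr t ht
  simp only [Pi.sub_apply, hua, hinit.self_of_nhds, gronwallBound_of_K_ne_0 hMpos.ne'] at hgronwall
  calc ‖h u t - h u₀ t - Φ t (u - u₀)‖
      ≤ c * ‖u - u₀‖ * (1 - (Real.exp (M * (t - a)))⁻¹) := by
        refine hgronwall.trans_eq ?_
        field_simp
        ring
    _ ≤ c * ‖u - u₀‖ := mul_le_of_le_one_right (by positivity) (sub_le_self _ (by positivity))

end SolutionMap

theorem hasDerivWithinAt_exp_of_commute {𝕜 𝔸 : Type*} [RCLike 𝕜] [NormedRing 𝔸]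
    [NormedAlgebra 𝕜 𝔸] [CompleteSpace 𝔸] {A : 𝕜 → 𝔸} {A' : 𝔸} {s : Set 𝕜} {t : 𝕜} (ht : t ∈ s)
    (hA : HasDerivWithinAt A A' s t) (hcomm : ∀ r ∈ s, Commute (A r) (A t)) :
    HasDerivWithinAt (fun r ↦ NormedSpace.exp (A r)) (A' * NormedSpace.exp (A t)) s t := by
  let : NormedAlgebra ℚ 𝔸 := .restrictScalars ℚ 𝕜 𝔸
  have hfactor (r) (hr : r ∈ s) : NormedSpace.exp (A r) =
      NormedSpace.exp (A r - A t) * NormedSpace.exp (A t) := by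
    rw [← NormedSpace.exp_add_of_commute ((hcomm r hr).sub_left (.refl _)), sub_add_cancel]
  have hexp : HasFDerivAt (NormedSpace.exp : 𝔸 → 𝔸) (1 : 𝔸 →L[𝕜] 𝔸) (A t - A t) := by
    rw [sub_self]
    exact hasFDerivAt_exp_zero
  exact ((hexp.comp_hasDerivWithinAt t (hA.sub_const _)).mul_const _).congr hfactor (hfactor t ht)

section ExpIntegral

variable {𝔸 : Type*} [NormedRing 𝔸] [NormedAlgebra ℝ 𝔸] [CompleteSpace 𝔸]

theorem commute_intervalIntegral_right {K : ℝ → 𝔸} {a b : ℝ} {x : 𝔸}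
    (hK : IntervalIntegrable K MeasureTheory.volume a b) (hx : ∀ t ∈ uIcc a b, Commute x (K t)) :
    Commute x (∫ τ in a..b, K τ) := by
  calc x * ∫ τ in a..b, K τ = ∫ τ in a..b, x * K τ :=
        ((ContinuousLinearMap.mul ℝ 𝔸 x).intervalIntegral_comp_comm hK).symm
    _ = ∫ τ in a..b, K τ * x := intervalIntegral.integral_congr hx
    _ = (∫ τ in a..b, K τ) * x :=
        ((ContinuousLinearMap.mul ℝ 𝔸).flip x).intervalIntegral_comp_comm hK

theorem hasDerivWithinAt_exp_integral_of_commute {K : ℝ → 𝔸} {a b : ℝ}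
    (hK : ContinuousOn K (Icc a b))
    (hcomm : ∀ s ∈ Icc a b, ∀ t ∈ Icc a b, Commute (K s) (K t)) {t : ℝ} (ht : t ∈ Icc a b) :
    HasDerivWithinAt (fun s ↦ NormedSpace.exp (∫ τ in a..s, K τ))
      (K t * NormedSpace.exp (∫ τ in a..t, K τ)) (Icc a b) t := by
  have hsub {s} (hs : s ∈ Icc a b) : uIcc a s ⊆ Icc a b := by
    rw [uIcc_of_le hs.1]
    exact Icc_subset_Icc_right hs.2
  have hint {s} (hs : s ∈ Icc a b) : IntervalIntegrable K MeasureTheory.volume a s :=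
    (hK.mono (hsub hs)).intervalIntegrable
  have : Fact (t ∈ Icc a b) := ⟨ht⟩
  refine hasDerivWithinAt_exp_of_commute ht
    (intervalIntegral.integral_hasDerivWithinAt_right (hint ht)
      (hK.stronglyMeasurableAtFilter_nhdsWithin measurableSet_Icc t) (hK t ht)) fun s hs ↦ ?_
  exact commute_intervalIntegral_right (hint ht) fun r hr ↦
    (commute_intervalIntegral_right (hint hs) fun q hq ↦
      hcomm r (hsub ht hr) q (hsub hs hq)).symm

end ExpIntegral

section Matrix

variable {𝕜 m n : Type*} [RCLike 𝕜] [Fintype m] [Fintype n] [DecidableEq n]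

theorem toMatrix'_exp (L : (n → 𝕜) →L[𝕜] (n → 𝕜)) :
    LinearMap.toMatrix' (NormedSpace.exp L : (n → 𝕜) →L[𝕜] (n → 𝕜)).toLinearMap =
      NormedSpace.exp (LinearMap.toMatrix' L.toLinearMap) := by
  let : NormedRing (Matrix n n 𝕜) := Matrix.linftyOpNormedRing
  let : NormedAlgebra ℚ ((n → 𝕜) →L[𝕜] (n → 𝕜)) := .restrictScalars ℚ 𝕜 _
  let toMatrix : ((n → 𝕜) →L[𝕜] (n → 𝕜)) ≃ₐ[𝕜] Matrix n n 𝕜 :=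
    (Module.End.toContinuousLinearMap (n → 𝕜)).symm.trans LinearMap.toMatrixAlgEquiv'
  exact NormedSpace.map_exp toMatrix
    toMatrix.toLinearMap.continuous_of_finiteDimensional L

theorem toMatrix'_intervalIntegral {L : ℝ → (n → 𝕜) →L[𝕜] (m → 𝕜)} {a b : ℝ}
    (hL : IntervalIntegrable L MeasureTheory.volume a b) :
    LinearMap.toMatrix' (∫ τ in a..b, L τ : (n → 𝕜) →L[𝕜] (m → 𝕜)).toLinearMap =
      Matrix.of fun i j ↦ ∫ τ in a..b, LinearMap.toMatrix' (L τ).toLinearMap i j := by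
  ext i j
  let entry : ((n → 𝕜) →L[𝕜] (m → 𝕜)) →L[𝕜] 𝕜 :=
    (ContinuousLinearMap.proj i).comp (ContinuousLinearMap.apply 𝕜 (m → 𝕜) (Pi.single j 1))
  have hentry (A : (n → 𝕜) →L[𝕜] (m → 𝕜)) : LinearMap.toMatrix' A.toLinearMap i j = entry A := by
    simp [entry, LinearMap.toMatrix'_apply]
  simp only [hentry, Matrix.of_apply]
  exact (entry.intervalIntegral_comp_comm hL).symm

theorem toContinuousLinearMap_mulVecLin_exp_integral {L : ℝ → (n → 𝕜) →L[𝕜] (n → 𝕜)} {a b : ℝ}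
    (hL : IntervalIntegrable L MeasureTheory.volume a b) :
    LinearMap.toContinuousLinearMap (Matrix.mulVecLin (NormedSpace.exp
      (Matrix.of fun i j ↦ ∫ τ in a..b, LinearMap.toMatrix' (L τ).toLinearMap i j))) =
      NormedSpace.exp (∫ τ in a..b, L τ) := by
  rw [← toMatrix'_intervalIntegral hL, ← toMatrix'_exp, ← Matrix.toLin'_apply',
    Matrix.toLin'_toMatrix']
  rfl

end Matrix

theorem solution_map_derivative_eq_exp_general {E : Type*} [NormedAddCommGroup E]
    [NormedSpace ℝ E] [CompleteSpace E] {a b : ℝ} (hab : a ≤ b) {f : E → ℝ → E}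
    {F : E → ℝ → E →L[ℝ] E} (hf : ∀ x t, HasFDerivAt (fun y ↦ f y t) (F x t) x)
    (hF : Continuous fun p : E × ℝ ↦ F p.1 p.2) {h : E → ℝ → E} {u₀ : E}
    (hode : ∀ᶠ u in 𝓝 u₀, ∀ t ∈ Icc a b, HasDerivWithinAt (h u) (f (h u t) t) (Icc a b) t)
    (hinit : ∀ᶠ u in 𝓝 u₀, h u a = u)
    (hcomm : ∀ s ∈ Icc a b, ∀ t ∈ Icc a b, Commute (F (h u₀ s) s) (F (h u₀ t) t)) :
    HasFDerivAt (fun u ↦ h u b) (NormedSpace.exp (∫ τ in a..b, F (h u₀ τ) τ)) u₀ := by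
  have hJ : ContinuousOn (fun t ↦ F (h u₀ t) t) (Icc a b) :=
    continuousOn_eval_along hF (HasDerivWithinAt.continuousOn hode.self_of_nhds)
  exact hasFDerivAt_solution_of_variational_equation hf hF hode hinit
    (fun _ ↦ hasDerivWithinAt_exp_integral_of_commute hJ hcomm) (by simp) (right_mem_Icc.2 hab)

/-- **Closed-form exponential expression for the derivative of the solution map.**
Let `h(u, t)` be a `C¹` family of solutions of `h' = f(h, t)` with `h(u, t₀) = u` for `u`
in an open neighborhood `V` of `u₀`, and let `J(t)` be the Jacobian of `f` in its first
argument along the solution through `u₀`. If the matrices `J(t)`, `t ∈ [t₀, T]`, pairwise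
commute, then the derivative of the time-`T` solution map `u ↦ h(u, T)` at `u₀` equals
(multiplication by) `exp(∫_{t₀}^T J(τ) dτ)` (entrywise integral, matrix exponential). -/
theorem solution_map_derivative_eq_exp (N : ℕ) (hN : 0 < N) (t₀ T : ℝ) (ht : t₀ < T)
    (f : (Fin N → ℝ) → ℝ → (Fin N → ℝ))
    (hf : ContDiff ℝ 1 (fun p : (Fin N → ℝ) × ℝ => f p.1 p.2))
    (h : (Fin N → ℝ) → ℝ → (Fin N → ℝ)) (u₀ : Fin N → ℝ)
    (V : Set (Fin N → ℝ)) (hV : IsOpen V) (hu₀ : u₀ ∈ V)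
    (hreg : ContDiffOn ℝ 1 (fun p : (Fin N → ℝ) × ℝ => h p.1 p.2) (V ×ˢ Set.Icc t₀ T))
    (hode : ∀ u ∈ V, ∀ t ∈ Set.Icc t₀ T,
      HasDerivWithinAt (h u) (f (h u t) t) (Set.Icc t₀ T) t)
    (hinit : ∀ u ∈ V, h u t₀ = u)
    (J : ℝ → Matrix (Fin N) (Fin N) ℝ)
    (hJ : ∀ t : ℝ, J t =
      LinearMap.toMatrix' ((fderiv ℝ (fun u => f u t) (h u₀ t) :
        (Fin N → ℝ) →L[ℝ] (Fin N → ℝ)) : (Fin N → ℝ) →ₗ[ℝ] (Fin N → ℝ)))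
    (hcomm : ∀ s ∈ Set.Icc t₀ T, ∀ t ∈ Set.Icc t₀ T, J s * J t = J t * J s) :
    HasFDerivAt (fun u => h u T)
      (LinearMap.toContinuousLinearMap
        (Matrix.mulVecLin
          (NormedSpace.exp (Matrix.of fun i j => ∫ τ in t₀..T, J τ i j)))) u₀ := by
  obtain rfl := funext hJ
  have hF := continuous_fderiv_left hf
  have hf' (x t) : HasFDerivAt (fun y ↦ f y t) (fderiv ℝ (fun y ↦ f y t) x) x :=
    ((hf.comp (contDiff_prodMk_left t)).differentiable one_ne_zero x).hasFDerivAt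
  have hint : IntervalIntegrable (fun t ↦ fderiv ℝ (fun u ↦ f u t) (h u₀ t))
      MeasureTheory.volume t₀ T :=
    (continuousOn_eval_along (F := fun x t ↦ fderiv ℝ (fun u ↦ f u t) x) hF
      (HasDerivWithinAt.continuousOn (hode u₀ hu₀))).intervalIntegrable_of_Icc ht.le
  rw [toContinuousLinearMap_mulVecLin_exp_integral hint]
  refine solution_map_derivative_eq_exp_general ht.le hf' hF
    (mem_of_superset (hV.mem_nhds hu₀) hode) (mem_of_superset (hV.mem_nhds hu₀) hinit)
    fun s hs t ht ↦ ContinuousLinearMap.coe_injective (LinearMap.toMatrix'.injective ?_)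
  simpa only [ContinuousLinearMap.toLinearMap_mul, LinearMap.toMatrix'_mul] using hcomm s hs t ht
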